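/- Let A_1 = [[1,0],[0,0]] and A_2 = [[0,0],[0,1]] (2×2 Hermitian matrices). Then: (i) A_1, A_2 are linearly independent over ℝ and ker A_1 ∩ ker A_2 = {0}; (ii) the sesquilinear Levi map 𝓛 : ℂ²×ℂ² → ℂ², 𝓛(z, z′) = (z̄_1 z′_1, z̄_2 z′_2), is surjective; (iii) the image of the Levi map L : ℂ² → ℝ², L(z) = (|z_1|², |z_2|²), equals [0,∞)×[0,∞), so L is not surjective onto ℝ². (Hence surjectivity of 𝓛 does not imply surjectivity of L, even when conditions (a) and (b) hold.) -/

import Mathlib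

open Matrix

/-! For `A j = E_jj` the sesquilinear Levi map is coordinatewise `z̄_j z'_j`, so fixing
`z = (1, …, 1)` already reaches every vector. On the diagonal `z = z'` the value becomes `|z_j|²`,
and square roots of nonnegative coordinates show that only the sign is constrained. -/

section Definitions

variable {ι κ 𝕜 : Type*} [Fintype ι]

/-- The sesquilinear Levi map `𝓛(z, w) = (z̄ᵀ A_j w)_j` of a family of square matrices, where the
bar is the star operation of the coefficients. -/
def sesquilinearLeviMap [NonUnitalNonAssocSemiring 𝕜] [Star 𝕜] (A : κ → Matrix ι ι 𝕜)
    (z w : ι → 𝕜) : κ → 𝕜 :=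
  fun j => star z ⬝ᵥ A j *ᵥ w

/-- The Levi map `L(z) = (z̄ᵀ A_j z)_j` of a family of Hermitian matrices. The real part turns the
values, which are real for Hermitian `A j`, into elements of `ℝ`. -/
def leviMap [RCLike 𝕜] (A : κ → Matrix ι ι 𝕜) (z : ι → 𝕜) : κ → ℝ :=
  fun j => RCLike.re (sesquilinearLeviMap A z z j)

end Definitions

section DiagonalUnits

variable {ι : Type*} [DecidableEq ι]

theorem linearIndependent_single_diag {R M : Type*} [Ring R] [IsDomain R]
    [AddCommGroup M] [Module R M] [Module.IsTorsionFree R M] {v : ι → M} (hv : ∀ j, v j ≠ 0) :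
    LinearIndependent R (fun j => single j j (v j)) := by
  have hdiag : diagLinearMap ι R M ∘ (fun j => single j j (v j)) = fun j => Pi.single j (v j) :=
    funext fun j => diag_single_same j (v j)
  refine LinearIndependent.of_comp (diagLinearMap ι R M) ?_
  rw [hdiag]
  exact Pi.linearIndependent_single_of_ne_zero hv

variable [Fintype ι]

theorem single_diag_one_mulVec {K : Type*} [NonAssocSemiring K] (j : ι) (z : ι → K) :
    single j j 1 *ᵥ z = Pi.single j (z j) := by
  rw [single_mulVec, one_mul, Pi.single]

theorem iInter_ker_single_diag (K : Type*) [NonAssocSemiring K] :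
    (⋂ j, {z : ι → K | single j j (1 : K) *ᵥ z = 0}) = {0} := by
  ext z
  simpa [single_diag_one_mulVec] using (funext_iff (f := z) (g := 0)).symm

theorem sesquilinearLeviMap_single_diag {K : Type*} [NonAssocSemiring K] [Star K] (z w : ι → K) :
    sesquilinearLeviMap (fun j => single j j 1) z w = star z * w := by
  ext j
  simp [sesquilinearLeviMap, single_diag_one_mulVec]

theorem surjective_sesquilinearLeviMap_single_diag (K : Type*) [NonAssocSemiring K] [StarRing K] :
    Function.Surjective fun p : (ι → K) × (ι → K) =>
      sesquilinearLeviMap (fun j => single j j 1) p.1 p.2 :=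
  fun v => ⟨(1, v), by simp [sesquilinearLeviMap_single_diag]⟩

variable {𝕜 : Type*} [RCLike 𝕜]

theorem leviMap_single_diag (z : ι → 𝕜) :
    leviMap (fun j => single j j 1) z = fun j => ‖z j‖ ^ 2 := by
  ext j
  simp [leviMap, sesquilinearLeviMap_single_diag, RCLike.conj_mul]

variable (ι 𝕜)

theorem range_leviMap_single_diag :
    Set.range (leviMap fun j : ι => single j j (1 : 𝕜)) = Set.Ici 0 := by
  ext v
  simp only [Set.mem_range, leviMap_single_diag, Set.mem_Ici]
  constructor
  · rintro ⟨z, rfl⟩ j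
    exact sq_nonneg ‖z j‖
  · intro hv
    exact ⟨fun j => (√(v j) : ℝ), funext fun j => by simp [Real.sq_sqrt (hv j)]⟩

theorem not_surjective_leviMap_single_diag [Nonempty ι] :
    ¬ Function.Surjective (leviMap fun j : ι => single j j (1 : 𝕜)) := by
  intro hsurj
  obtain ⟨v, hv⟩ := exists_lt (0 : ι → ℝ)
  have hv_nonneg : v ∈ Set.Ici 0 := range_leviMap_single_diag ι 𝕜 ▸ hsurj v
  exact hv.not_ge hv_nonneg

theorem sesquilinear_surjective_levi_not_surjective_example_general [Nonempty ι] :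
    let A : ι → Matrix ι ι 𝕜 := fun j => single j j 1
    (LinearIndependent ℝ A ∧ (⋂ j, {z : ι → 𝕜 | A j *ᵥ z = 0}) = {0}) ∧
      Function.Surjective (fun p : (ι → 𝕜) × (ι → 𝕜) => sesquilinearLeviMap A p.1 p.2) ∧
      Set.range (leviMap A) = Set.Ici 0 ∧
      ¬ Function.Surjective (leviMap A) :=
  ⟨⟨linearIndependent_single_diag fun _ => one_ne_zero, iInter_ker_single_diag 𝕜⟩,
    surjective_sesquilinearLeviMap_single_diag 𝕜, range_leviMap_single_diag ι 𝕜,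
    not_surjective_leviMap_single_diag ι 𝕜⟩

end DiagonalUnits

theorem diag_units_fin_two (R : Type*) [Zero R] [One R] :
    (![!![1, 0; 0, 0], !![0, 0; 0, 1]] : Fin 2 → Matrix (Fin 2) (Fin 2) R) =
      fun j => single j j 1 := by
  ext j a b
  fin_cases j <;> fin_cases a <;> fin_cases b <;> rfl

theorem setOf_nonneg_fin_two (R : Type*) [Zero R] [Preorder R] :
    {v : Fin 2 → R | 0 ≤ v 0 ∧ 0 ≤ v 1} = Set.Ici 0 := by
  ext v
  simp [Pi.le_def]

/-- For `A₁ = diag(1,0)`, `A₂ = diag(0,1)`: conditions (a) and (b) hold, the sesquilinear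
Levi map `𝓛(z, z') = (z̄₁z'₁, z̄₂z'₂)` is surjective, but the image of the Levi map
`L(z) = (|z₁|², |z₂|²)` is `[0,∞) × [0,∞)`, so `L` is not surjective onto `ℝ²`. -/
theorem sesquilinear_surjective_levi_not_surjective_example :
    let A : Fin 2 → Matrix (Fin 2) (Fin 2) ℂ := ![!![1,0; 0,0], !![0,0; 0,1]]
    (LinearIndependent ℝ A ∧
        (⋂ j, {z : Fin 2 → ℂ | (A j).mulVec z = 0}) = {0}) ∧
      Function.Surjective (fun p : (Fin 2 → ℂ) × (Fin 2 → ℂ) =>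
        (fun j => star p.1 ⬝ᵥ (A j).mulVec p.2 : Fin 2 → ℂ)) ∧
      Set.range (fun z : Fin 2 → ℂ =>
          (fun j => (star z ⬝ᵥ (A j).mulVec z).re : Fin 2 → ℝ)) =
        {v : Fin 2 → ℝ | 0 ≤ v 0 ∧ 0 ≤ v 1} ∧
      ¬ Function.Surjective (fun z : Fin 2 → ℂ =>
          (fun j => (star z ⬝ᵥ (A j).mulVec z).re : Fin 2 → ℝ)) := by
  rw [diag_units_fin_two, setOf_nonneg_fin_two]
  exact sesquilinear_surjective_levi_not_surjective_example_general (Fin 2) ℂ
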